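/- arXiv:1909.04484 — 2 statements merged into one kernel-verified Lean document; each statement's English description precedes it below -/
import Mathlib

section
/- Assume F ∈ C¹(ℝ,ℝ) with F(0) = 0, F(x) > 0 for all x ≠ 0, and F′(x) = O(1/|log x|) as x → 0⁺. Then there exists ε₁* > 0 such that for every ε with 0 ≤ ε < ε₁*, Lebesgue measure λ is the unique acim of the self-consistent system: every probability measure μ on [0,1] with μ ≪ λ and (T_μ^ε)_*μ = μ is equal to λ. -/
open MeasureTheory

/-- Lebesgue measure on the interval `[0,1]`. -/
noncomputable def lebI : Measure ℝ := volume.restrict (Set.Icc 0 1)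

/-- `E_μ = ∫₀¹ x dμ(x)`. -/
noncomputable def Emu (μ : Measure ℝ) : ℝ := ∫ x in Set.Icc (0:ℝ) 1, x ∂μ

/-- The self-consistent dynamics `T_μ^ε(x) = (2 + ε F(1/E_μ − 2)) x mod 1`. -/
noncomputable def Tsc (ε : ℝ) (F : ℝ → ℝ) (μ : Measure ℝ) (x : ℝ) : ℝ :=
  Int.fract ((2 + ε * F (1 / Emu μ - 2)) * x)

/-!
Put `t = 1 / E_μ - 2` and `δ = ε F(t)`, so that `Tsc ε F μ` is the `β`-transformation with
`β = 2 + δ`. Its transfer operator maps decreasing densities to decreasing densities and, after two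
steps, creates a definite fraction of constant density. Hence it contracts exponentially, the
iterates of Lebesgue measure converge to the acim `μ`, and `j` double steps determine `μ` up to an
error `2 q ^ j` with `q < 1`. As one step of the `β`-transformation moves Lebesgue measure by at
most `δ`, this gives `0 ≤ t ≤ a (j δ + q ^ j)` for all `j`, and `j` of order `|log t|` yields
`t ≤ K (1 + |log t|) δ` if `0 < t`. But the hypothesis on `F` gives `δ ≤ C ε t / (1 + |log t|)`, so
for small `ε` necessarily `t = 0`. Then `β = 2`, and Lebesgue measure is the only acim of the
doubling map.
-/

open Asymptotics Filter Set Topology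

section Integration

variable {f φ : ℝ → ℝ} {a b B : ℝ}

lemma intervalIntegrable_bdd_mul (hf : IntervalIntegrable f volume a b) (hφ : Measurable φ)
    (hB : ∀ x, |φ x| ≤ B) : IntervalIntegrable (fun x => φ x * f x) volume a b := by
  rw [intervalIntegrable_iff] at hf ⊢
  exact hf.bdd_mul hφ.aestronglyMeasurable (.of_forall hB)

lemma intervalIntegrable_of_abs_le (hφ : Measurable φ) (hB : ∀ x, |φ x| ≤ B) :
    IntervalIntegrable φ volume a b := by
  simpa using intervalIntegrable_bdd_mul (f := fun _ => 1) intervalIntegrable_const hφ hB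

lemma abs_integral_le_of_abs_le (hB : ∀ x, |φ x| ≤ B) (hab : a ≤ b) :
    |∫ x in a..b, φ x| ≤ B * (b - a) := by
  simpa [abs_of_nonneg (sub_nonneg.2 hab)] using
    intervalIntegral.norm_integral_le_of_norm_le_const (a := a) (b := b) (f := φ) (C := B)
      fun x _ => hB x

lemma abs_integral_mul_le_integral_abs (hf : IntervalIntegrable f volume 0 1)
    (hB : ∀ x, |φ x| ≤ 1) : |∫ x in 0..1, φ x * f x| ≤ ∫ x in 0..1, |f x| := by
  rw [← Real.norm_eq_abs]
  refine intervalIntegral.norm_integral_le_of_norm_le zero_le_one (.of_forall fun x _ => ?_) hf.abs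
  rw [norm_mul]
  exact mul_le_of_le_one_left (abs_nonneg _) (hB x)

lemma integral_zero_eq_integral_zero_one (hf : ∀ x, 1 ≤ x → f x = 0) (hb : 1 ≤ b) :
    ∫ x in 0..b, f x = ∫ x in 0..1, f x := by
  rw [intervalIntegral.integral_of_le (zero_le_one.trans hb),
    intervalIntegral.integral_of_le zero_le_one]
  exact setIntegral_eq_of_subset_of_forall_sdiff_eq_zero measurableSet_Ioc
    (Ioc_subset_Ioc_right hb)
    fun x hx => hf x (not_le.1 fun h => hx.2 ⟨hx.1.1, h⟩).le

lemma intervalIntegrable_zero_of_eq_zero (hfi : IntervalIntegrable f volume 0 1)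
    (hf : ∀ x, 1 ≤ x → f x = 0) (hb : 1 ≤ b) : IntervalIntegrable f volume 0 b :=
  hfi.trans <| (intervalIntegrable_const (c := (0 : ℝ))).congr_uIoo fun x hx =>
    (hf x (uIoo_of_le hb ▸ hx).1.le).symm

lemma integral_comp_fract_mul (hφ : Measurable φ) (hB : ∀ x, |φ x| ≤ B) (N : ℕ)
    (hf : IntervalIntegrable f volume 0 N) :
    ∫ y in 0..N, φ (Int.fract y) * f y =
      ∫ y in 0..1, φ y * ∑ k ∈ Finset.range N, f (y + k) := by
  have hint : ∀ k < N, IntervalIntegrable (fun y => φ (Int.fract y) * f y) volume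
      (k : ℕ) (k + 1 : ℕ) := fun k hk =>
    intervalIntegrable_bdd_mul (φ := fun y => φ (Int.fract y))
      (hf.mono_set (by
        rw [uIcc_of_le (by simp), uIcc_of_le (by simp)]
        exact Icc_subset_Icc (by simp) (by exact_mod_cast hk)))
      (by fun_prop) fun x => hB _
  have hshift : ∀ k : ℕ, ∀ y ∈ Ioo (0 : ℝ) 1,
      φ (Int.fract (y + k)) * f (y + k) = φ y * f (y + k) := fun k y hy => by
    rw [Int.fract_add_natCast, Int.fract_eq_self.2 ⟨hy.1.le, hy.2⟩]
  have hpiece : ∀ k : ℕ, ∫ y in (k : ℕ)..(k + 1 : ℕ), φ (Int.fract y) * f y =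
      ∫ y in 0..1, φ y * f (y + k) := fun k => by
    rw [← intervalIntegral.integral_congr_Ioo_of_le zero_le_one (hshift k),
      intervalIntegral.integral_comp_add_right (fun y => φ (Int.fract y) * f y)]
    simp [add_comm]
  simp_rw [Finset.mul_sum]
  rw [intervalIntegral.integral_finsetSum, ← Finset.sum_congr rfl fun k _ => hpiece k,
    intervalIntegral.sum_integral_adjacent_intervals hint, Nat.cast_zero]
  intro k hk
  have := (hint k (Finset.mem_range.1 hk)).comp_add_right k
  refine IntervalIntegrable.congr_uIoo (by simpa [-Int.fract_add_natCast] using this) fun y hy => ?_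
  exact hshift k y (by simpa using hy)

end Integration

/-- The `β`-transformation `x ↦ β x mod 1`; the self-consistent dynamics `Tsc ε F μ` is the
`β`-transformation with `β = 2 + ε F(1/E_μ - 2)`. -/
noncomputable def betaMap (β x : ℝ) : ℝ := Int.fract (β * x)

/-- The Perron–Frobenius (transfer) operator of `betaMap β`, for densities on `[0, 1)` represented
by functions on `[0, ∞)` that vanish on `[1, ∞)`. With this convention the last inverse branch,
which need not be full, requires no truncation of its domain. -/
noncomputable def transferOp (β : ℝ) (f : ℝ → ℝ) : ℝ → ℝ :=
  (Iio 1).indicator fun x => β⁻¹ * ∑ k ∈ Finset.range ⌈β⌉₊, f ((x + k) / β)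

section TransferOperator

variable {β B : ℝ} {f φ : ℝ → ℝ}

@[fun_prop]
lemma measurable_betaMap (β : ℝ) : Measurable (betaMap β) := by
  unfold betaMap
  fun_prop

lemma integral_comp_betaMap_mul (hβ : 0 < β) (hφ : Measurable φ) (hB : ∀ x, |φ x| ≤ B)
    (hfi : IntervalIntegrable f volume 0 1) (hf : ∀ x, 1 ≤ x → f x = 0) :
    ∫ x in 0..1, φ (betaMap β x) * f x = ∫ x in 0..1, φ x * transferOp β f x := by
  have hN : 1 ≤ (⌈β⌉₊ : ℝ) / β := (one_le_div hβ).2 (Nat.le_ceil β)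
  have hfi' : IntervalIntegrable (fun y => f (y / β)) volume 0 ⌈β⌉₊ := by
    simpa [div_eq_inv_mul, hβ.ne'] using
      (intervalIntegrable_zero_of_eq_zero hfi hf hN).comp_mul_left (c := β⁻¹)
  calc ∫ x in 0..1, φ (betaMap β x) * f x
      = ∫ x in 0..⌈β⌉₊ / β, φ (Int.fract (β * x)) * f (β * x / β) := by
        simp_rw [mul_div_cancel_left₀ _ hβ.ne']
        exact (integral_zero_eq_integral_zero_one (fun x hx => by rw [hf x hx, mul_zero]) hN).symm
    _ = β⁻¹ * ∫ y in 0..⌈β⌉₊, φ (Int.fract y) * f (y / β) := by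
        rw [intervalIntegral.integral_comp_mul_left (fun y => φ (Int.fract y) * f (y / β)) hβ.ne',
          mul_zero, mul_div_cancel₀ _ hβ.ne', smul_eq_mul]
    _ = ∫ x in 0..1, φ x * transferOp β f x := by
        rw [integral_comp_fract_mul hφ hB _ hfi', ← intervalIntegral.integral_const_mul]
        refine intervalIntegral.integral_congr_Ioo_of_le zero_le_one fun x hx => ?_
        simp only [transferOp, indicator_of_mem (mem_Iio.2 hx.2)]
        ring

lemma integral_transferOp (hβ : 0 < β) (hfi : IntervalIntegrable f volume 0 1)
    (hf : ∀ x, 1 ≤ x → f x = 0) : ∫ x in 0..1, transferOp β f x = ∫ x in 0..1, f x := by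
  simpa using (integral_comp_betaMap_mul (φ := fun _ => 1) (B := 1) hβ measurable_const
    (by simp) hfi hf).symm

lemma transferOp_eq_zero (β : ℝ) (f : ℝ → ℝ) {x : ℝ} (hx : 1 ≤ x) : transferOp β f x = 0 :=
  indicator_of_notMem (by simpa using hx) _

lemma nonneg_of_antitoneOn_of_eq_zero (hf : AntitoneOn f (Ici 0)) (hf0 : ∀ x, 1 ≤ x → f x = 0)
    {x : ℝ} (hx : 0 ≤ x) : 0 ≤ f x :=
  (hf0 _ (le_max_right x 1)).ge.trans
    (hf hx (hx.trans (le_max_left x 1)) (le_max_left x 1))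

lemma inv_mul_le_transferOp (hβ : 0 < β) (hf : ∀ x, 0 ≤ x → 0 ≤ f x) {x : ℝ}
    (hx : x ∈ Ico (0 : ℝ) 1) : β⁻¹ * f (x / β) ≤ transferOp β f x := by
  rw [transferOp, indicator_of_mem (mem_Iio.2 hx.2)]
  gcongr
  simpa using Finset.single_le_sum (f := fun k : ℕ => f ((x + k) / β))
    (fun k _ => hf _ (div_nonneg (add_nonneg hx.1 k.cast_nonneg) hβ.le))
    (Finset.mem_range.2 (Nat.ceil_pos.2 hβ))

lemma transferOp_nonneg (hβ : 0 < β) (hf : ∀ x, 0 ≤ x → 0 ≤ f x) {x : ℝ} (hx : 0 ≤ x) :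
    0 ≤ transferOp β f x := by
  rcases lt_or_ge x 1 with hx1 | hx1
  · exact (mul_nonneg (inv_nonneg.2 hβ.le) (hf _ (div_nonneg hx hβ.le))).trans
      (inv_mul_le_transferOp hβ hf ⟨hx, hx1⟩)
  · exact (transferOp_eq_zero β f hx1).ge

lemma antitoneOn_transferOp (hβ : 0 < β) (hf : AntitoneOn f (Ici 0))
    (hf0 : ∀ x, 1 ≤ x → f x = 0) : AntitoneOn (transferOp β f) (Ici 0) := by
  intro x hx y hy hxy
  rcases lt_or_ge y 1 with hy1 | hy1
  · simp only [transferOp, indicator_of_mem (mem_Iio.2 hy1),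
      indicator_of_mem (mem_Iio.2 (hxy.trans_lt hy1))]
    gcongr with k
    exact hf (div_nonneg (add_nonneg hx k.cast_nonneg) hβ.le)
      (div_nonneg (add_nonneg hy k.cast_nonneg) hβ.le) (by gcongr)
  · rw [transferOp_eq_zero β f hy1]
    exact transferOp_nonneg hβ (fun _ => nonneg_of_antitoneOn_of_eq_zero hf hf0) hx

lemma transferOp_apply_zero_le (hβ : 0 < β) (hf : AntitoneOn f (Ici 0))
    (hf0 : ∀ x, 1 ≤ x → f x = 0) :
    transferOp β f 0 ≤ β⁻¹ * f 0 + ∫ x in 0..1, f x := by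
  have hnonneg := fun x => nonneg_of_antitoneOn_of_eq_zero hf hf0 (x := x)
  have hanti : AntitoneOn (fun y => f (y / β)) (Icc 0 (0 + ⌈β⌉₊)) := fun x hx y hy hxy =>
    hf (div_nonneg hx.1 hβ.le) (div_nonneg hy.1 hβ.le) (by gcongr)
  have hsum : ∑ k ∈ Finset.range ⌈β⌉₊, f (k / β) ≤ f 0 + β * ∫ x in 0..1, f x :=
    calc ∑ k ∈ Finset.range ⌈β⌉₊, f (k / β)
        ≤ ∑ k ∈ Finset.range (⌈β⌉₊ + 1), f (k / β) :=
          Finset.sum_le_sum_of_subset_of_nonneg (Finset.range_subset_range.2 (Nat.le_succ _))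
            fun k _ _ => hnonneg _ (by positivity)
      _ = f 0 + ∑ k ∈ Finset.range ⌈β⌉₊, f ((0 + (k + 1 : ℕ)) / β) := by
          simp [Finset.sum_range_succ', add_comm]
      _ ≤ f 0 + ∫ y in 0..⌈β⌉₊, f (y / β) := by
          simpa using hanti.sum_le_integral
      _ = f 0 + β * ∫ x in 0..1, f x := by
          rw [intervalIntegral.integral_comp_div _ hβ.ne', zero_div, smul_eq_mul,
            integral_zero_eq_integral_zero_one hf0 ((one_le_div hβ).2 (Nat.le_ceil β))]
  calc transferOp β f 0 = β⁻¹ * ∑ k ∈ Finset.range ⌈β⌉₊, f (k / β) := by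
        simp [transferOp]
    _ ≤ β⁻¹ * (f 0 + β * ∫ x in 0..1, f x) := by gcongr
    _ = β⁻¹ * f 0 + ∫ x in 0..1, f x := by rw [mul_add, inv_mul_cancel_left₀ hβ.ne']

end TransferOperator

/-- The cone of decreasing densities on `[0, 1)`, extended by zero and not normalised, on which the
transfer operator contracts. Any constant above `2` in `apply_zero_le` is preserved by
`transferOp β` for `2 ≤ β`; the value `3` leaves room for splitting off a constant density. -/
structure DecreasingDensity (f : ℝ → ℝ) : Prop where
  antitoneOn : AntitoneOn f (Ici 0)
  eq_zero : ∀ x, 1 ≤ x → f x = 0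
  apply_zero_le : f 0 ≤ 3 * ∫ x in 0..1, f x

lemma integral_indicator_Iio (u : ℝ → ℝ) :
    ∫ x in 0..1, (Iio 1).indicator u x = ∫ x in 0..1, u x :=
  intervalIntegral.integral_congr_Ioo_of_le zero_le_one fun _ hx =>
    indicator_of_mem (mem_Iio.2 hx.2) u

lemma integral_mul_indicator_Iio (φ u : ℝ → ℝ) :
    ∫ x in 0..1, φ x * (Iio 1).indicator u x = ∫ x in 0..1, φ x * u x :=
  intervalIntegral.integral_congr_Ioo_of_le zero_le_one fun x hx => by
    simp only [indicator_of_mem (mem_Iio.2 hx.2)]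

namespace DecreasingDensity

variable {β B : ℝ} {f g φ u : ℝ → ℝ}

lemma indicator_Iio (hu : AntitoneOn u (Ico 0 1)) (hu0 : ∀ x ∈ Ico (0 : ℝ) 1, 0 ≤ u x)
    (h : u 0 ≤ 3 * ∫ x in 0..1, u x) : DecreasingDensity ((Iio 1).indicator u) where
  antitoneOn x hx y hy hxy := by
    rcases lt_or_ge y 1 with hy1 | hy1
    · rw [indicator_of_mem (mem_Iio.2 hy1), indicator_of_mem (mem_Iio.2 (hxy.trans_lt hy1))]
      exact hu ⟨hx, hxy.trans_lt hy1⟩ ⟨hy, hy1⟩ hxy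
    · rw [indicator_of_notMem (notMem_Iio.2 hy1)]
      exact indicator_apply_nonneg fun hx1 => hu0 x ⟨hx, hx1⟩
  eq_zero x hx := indicator_of_notMem (notMem_Iio.2 hx) _
  apply_zero_le := by
    rwa [integral_indicator_Iio, indicator_of_mem (mem_Iio.2 one_pos)]

lemma nonneg (hf : DecreasingDensity f) {x : ℝ} (hx : 0 ≤ x) : 0 ≤ f x :=
  nonneg_of_antitoneOn_of_eq_zero hf.antitoneOn hf.eq_zero hx

lemma intervalIntegrable (hf : DecreasingDensity f) : IntervalIntegrable f volume 0 1 :=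
  (hf.antitoneOn.mono (by
    rw [uIcc_of_le zero_le_one]; exact Icc_subset_Ici_self)).intervalIntegrable

lemma integral_nonneg (hf : DecreasingDensity f) : 0 ≤ ∫ x in 0..1, f x :=
  intervalIntegral.integral_nonneg zero_le_one fun _ hx => hf.nonneg hx.1

lemma abs_integral_mul_le (hf : DecreasingDensity f) (hB : ∀ x, |φ x| ≤ 1) :
    |∫ x in 0..1, φ x * f x| ≤ ∫ x in 0..1, f x := by
  refine (abs_integral_mul_le_integral_abs hf.intervalIntegrable hB).trans_eq
    (intervalIntegral.integral_congr fun x hx => abs_of_nonneg (hf.nonneg ?_))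
  exact (uIcc_of_le (zero_le_one' ℝ) ▸ hx).1

protected lemma integral_transferOp (hf : DecreasingDensity f) (hβ : 2 ≤ β) :
    ∫ x in 0..1, transferOp β f x = ∫ x in 0..1, f x :=
  integral_transferOp (by linarith) hf.intervalIntegrable hf.eq_zero

protected lemma transferOp_apply_zero_le (hf : DecreasingDensity f) (hβ : 2 ≤ β) :
    transferOp β f 0 ≤ f 0 / 2 + ∫ x in 0..1, f x := by
  have hinv : β⁻¹ * f 0 ≤ f 0 / 2 := by
    rw [inv_mul_eq_div]
    exact div_le_div_of_nonneg_left (hf.nonneg le_rfl) two_pos hβ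
  linarith [transferOp_apply_zero_le (by linarith) hf.antitoneOn hf.eq_zero (β := β)]

protected lemma transferOp (hf : DecreasingDensity f) (hβ : 2 ≤ β) :
    DecreasingDensity (transferOp β f) where
  antitoneOn := antitoneOn_transferOp (by linarith) hf.antitoneOn hf.eq_zero
  eq_zero _ hx := transferOp_eq_zero β f hx
  apply_zero_le := by
    rw [hf.integral_transferOp hβ]
    linarith [hf.transferOp_apply_zero_le hβ, hf.apply_zero_le, hf.integral_nonneg]

lemma iterate_transferOp (hf : DecreasingDensity f) (hβ : 2 ≤ β) (n : ℕ) :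
    DecreasingDensity ((transferOp β)^[n] f) ∧
      ∫ x in 0..1, (transferOp β)^[n] f x = ∫ x in 0..1, f x := by
  induction n with
  | zero => exact ⟨hf, rfl⟩
  | succ n ih =>
    rw [Function.iterate_succ_apply']
    exact ⟨ih.1.transferOp hβ, (ih.1.integral_transferOp hβ).trans ih.2⟩

lemma integral_comp_iterate_betaMap_mul (hf : DecreasingDensity f) (hβ : 2 ≤ β)
    (hφ : Measurable φ) (hB : ∀ x, |φ x| ≤ B) (n : ℕ) :
    ∫ x in 0..1, φ ((betaMap β)^[n] x) * f x =
      ∫ x in 0..1, φ x * (transferOp β)^[n] f x := by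
  induction n generalizing f with
  | zero => rfl
  | succ n ih =>
    simp only [Function.iterate_succ_apply]
    rw [← ih (hf.transferOp hβ)]
    exact integral_comp_betaMap_mul (by linarith)
      (hφ.comp ((measurable_betaMap β).iterate n)) (fun x => hB _) hf.intervalIntegrable hf.eq_zero

lemma integral_div_three_le (hf : DecreasingDensity f) {x : ℝ} (hx : x ∈ Icc (0 : ℝ) (1 / 4)) :
    (∫ y in 0..1, f y) / 3 ≤ f x := by
  have hmem : (1 / 4 : ℝ) ∈ uIcc (0 : ℝ) 1 := by norm_num [uIcc_of_le, mem_Icc]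
  have hi : IntervalIntegrable f volume 0 (1 / 4) :=
    hf.intervalIntegrable.mono_set (uIcc_subset_uIcc_left hmem)
  have hi' : IntervalIntegrable f volume (1 / 4) 1 :=
    hf.intervalIntegrable.mono_set (uIcc_subset_uIcc_right hmem)
  have hleft : ∫ y in 0..(1 / 4), f y ≤ 1 / 4 * f 0 := by
    simpa using intervalIntegral.integral_mono_on (by norm_num) hi intervalIntegrable_const
      fun y hy => hf.antitoneOn self_mem_Ici hy.1 hy.1
  have hright : ∫ y in (1 / 4)..1, f y ≤ (1 - 1 / 4) * f (1 / 4) := by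
    simpa using intervalIntegral.integral_mono_on (by norm_num) hi' intervalIntegrable_const
      fun y hy => hf.antitoneOn (a := 1 / 4) (by norm_num) (le_trans (by norm_num) hy.1) hy.1
  have hadd := intervalIntegral.integral_add_adjacent_intervals hi hi'
  have hfx : f (1 / 4) ≤ f x := hf.antitoneOn hx.1 (by norm_num) hx.2
  linarith [hf.apply_zero_le]

lemma integral_div_sq_le_iterate_transferOp_two (hf : DecreasingDensity f) (hβ : 2 ≤ β) {x : ℝ}
    (hx : x ∈ Ico (0 : ℝ) 1) :
    (∫ y in 0..1, f y) / (3 * β ^ 2) ≤ (transferOp β)^[2] f x := by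
  have hβ0 : 0 < β := by linarith
  have hx2 : x / β ∈ Ico (0 : ℝ) 1 :=
    ⟨div_nonneg hx.1 hβ0.le, (div_lt_one hβ0).2 (by linarith [hx.2])⟩
  have hx4 : x / β / β ∈ Icc (0 : ℝ) (1 / 4) := by
    refine ⟨div_nonneg hx2.1 hβ0.le, ?_⟩
    rw [div_div, div_le_div_iff₀ (by positivity) (by norm_num)]
    nlinarith [hx.2]
  calc (∫ y in 0..1, f y) / (3 * β ^ 2) = β⁻¹ * (β⁻¹ * ((∫ y in 0..1, f y) / 3)) := by
        field_simp
    _ ≤ β⁻¹ * (β⁻¹ * f (x / β / β)) := by gcongr; exact hf.integral_div_three_le hx4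
    _ ≤ β⁻¹ * transferOp β f (x / β) := by
        gcongr; exact inv_mul_le_transferOp hβ0 (fun _ => hf.nonneg) hx2
    _ ≤ (transferOp β)^[2] f x :=
        inv_mul_le_transferOp hβ0 (fun _ => (hf.transferOp hβ).nonneg) hx

lemma sub_const (hf : DecreasingDensity f) {c : ℝ} (hc : ∀ x ∈ Ico (0 : ℝ) 1, c ≤ f x)
    (h : f 0 + 2 * c ≤ 3 * ∫ x in 0..1, f x) :
    DecreasingDensity ((Iio 1).indicator fun x => f x - c) := by
  refine indicator_Iio (fun x hx y hy hxy => sub_le_sub_right (hf.antitoneOn hx.1 hy.1 hxy) c)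
    (fun x hx => sub_nonneg.2 (hc x hx)) ?_
  rw [intervalIntegral.integral_sub hf.intervalIntegrable intervalIntegrable_const,
    intervalIntegral.integral_const, sub_zero, one_smul]
  linarith

-- Doeblin's condition: two steps of the transfer operator create a constant component, whose
-- removal leaves a density in the cone.
lemma exists_integral_comp_iterate_two_mul_eq (hf : DecreasingDensity f) (hβ : 2 ≤ β) :
    ∃ g, DecreasingDensity g ∧
      ∫ x in 0..1, g x = (1 - (3 * β ^ 2)⁻¹) * ∫ x in 0..1, f x ∧
      ∀ φ : ℝ → ℝ, Measurable φ → (∀ x, |φ x| ≤ 1) →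
        ∫ x in 0..1, φ ((betaMap β)^[2] x) * f x =
          (∫ x in 0..1, φ x * g x) + (3 * β ^ 2)⁻¹ * (∫ x in 0..1, f x) * ∫ x in 0..1, φ x := by
  obtain ⟨hdens, hmass⟩ := hf.iterate_transferOp hβ 2
  set m := ∫ x in 0..1, f x
  set c := (3 * β ^ 2)⁻¹ * m with hc
  have hc_le : c ≤ m / 12 := by
    rw [hc, inv_mul_eq_div]
    exact div_le_div_of_nonneg_left hf.integral_nonneg (by norm_num) (by nlinarith)
  refine ⟨(Iio 1).indicator fun x => (transferOp β)^[2] f x - c,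
    hdens.sub_const (fun x hx => ?_) ?_, ?_, fun φ hφ hB => ?_⟩
  · rw [hc, inv_mul_eq_div]
    exact hf.integral_div_sq_le_iterate_transferOp_two hβ hx
  · have hfirst := hf.transferOp_apply_zero_le hβ
    have hsecond := (hf.transferOp hβ).transferOp_apply_zero_le hβ
    rw [hf.integral_transferOp hβ] at hsecond
    rw [hmass, Function.iterate_succ_apply, Function.iterate_one]
    linarith [hf.apply_zero_le, hf.integral_nonneg]
  · rw [integral_indicator_Iio,
      intervalIntegral.integral_sub hdens.intervalIntegrable intervalIntegrable_const, hmass,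
      intervalIntegral.integral_const, sub_zero, one_smul, hc]
    ring
  · rw [hf.integral_comp_iterate_betaMap_mul hβ hφ hB, integral_mul_indicator_Iio]
    simp_rw [mul_sub]
    rw [intervalIntegral.integral_sub (intervalIntegrable_bdd_mul hdens.intervalIntegrable hφ hB)
      (intervalIntegrable_bdd_mul intervalIntegrable_const hφ hB),
      intervalIntegral.integral_mul_const]
    ring

theorem abs_integral_comp_iterate_sub_le (hf : DecreasingDensity f) (hg : DecreasingDensity g)
    (hfg : ∫ x in 0..1, f x = ∫ x in 0..1, g x) (hβ : 2 ≤ β) (hφ : Measurable φ)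
    (hB : ∀ x, |φ x| ≤ 1) (n : ℕ) :
    |(∫ x in 0..1, φ ((betaMap β)^[2 * n] x) * f x) -
        ∫ x in 0..1, φ ((betaMap β)^[2 * n] x) * g x| ≤
      2 * (1 - (3 * β ^ 2)⁻¹) ^ n * ∫ x in 0..1, f x := by
  induction n generalizing f g with
  | zero =>
    have := abs_sub (∫ x in 0..1, φ x * f x) (∫ x in 0..1, φ x * g x)
    simp only [mul_zero, Function.iterate_zero, id_eq, pow_zero, mul_one]
    linarith [hf.abs_integral_mul_le hB, hg.abs_integral_mul_le hB]
  | succ n ih =>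
    obtain ⟨f', hf', hmf, hφf⟩ := hf.exists_integral_comp_iterate_two_mul_eq hβ
    obtain ⟨g', hg', hmg, hφg⟩ := hg.exists_integral_comp_iterate_two_mul_eq hβ
    have hφn : Measurable fun x => φ ((betaMap β)^[2 * n] x) :=
      hφ.comp ((measurable_betaMap β).iterate _)
    simp only [mul_add_one, Function.iterate_add_apply]
    rw [hφf _ hφn fun x => hB _, hφg _ hφn fun x => hB _, hfg, add_sub_add_right_eq_sub, pow_succ,
      ← hfg, mul_assoc, mul_assoc, ← hmf, ← mul_assoc]
    exact ih hf' hg' (by rw [hmf, hmg, hfg])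

lemma intervalIntegrable_id_mul (hf : DecreasingDensity f) :
    IntervalIntegrable (fun x => x * f x) volume 0 1 :=
  hf.intervalIntegrable.continuousOn_mul continuousOn_id

lemma integral_div_twelve_le_integral_id_mul (hf : DecreasingDensity f) :
    (∫ x in 0..1, f x) / 12 ≤ ∫ x in 0..1, x * f x := by
  have hfi := hf.intervalIntegrable
  have hpoint : ∀ x ∈ Icc (0 : ℝ) 1,
      1 / 3 * f x - x * f x ≤ (∫ x in 0..1, f x) * (1 - x) ^ 3 := fun x hx => by
    have hcube : 1 - 3 * x ≤ (1 - x) ^ 3 := by nlinarith [mul_nonneg hx.1 hx.1, hx.2]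
    have hfx : f x ≤ 3 * ∫ x in 0..1, f x :=
      (hf.antitoneOn self_mem_Ici hx.1 hx.1).trans hf.apply_zero_le
    rcases le_total x (1 / 3) with _ | _
    · nlinarith [hf.integral_nonneg]
    · nlinarith [hf.integral_nonneg, hf.nonneg hx.1, pow_nonneg (sub_nonneg.2 hx.2) 3]
  have := intervalIntegral.integral_mono_on zero_le_one
    ((hfi.const_mul _).sub hf.intervalIntegrable_id_mul)
    (Continuous.intervalIntegrable (by fun_prop) 0 1) hpoint
  rw [intervalIntegral.integral_sub (hfi.const_mul _) hf.intervalIntegrable_id_mul,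
    intervalIntegral.integral_const_mul, intervalIntegral.integral_const_mul,
    intervalIntegral.integral_comp_sub_left (fun x => x ^ 3), integral_pow] at this
  linarith

lemma integral_id_mul_le_integral_div_two (hf : DecreasingDensity f) :
    ∫ x in 0..1, x * f x ≤ (∫ x in 0..1, f x) / 2 := by
  have hfi := hf.intervalIntegrable
  have hmid : (1 / 2 : ℝ) ∈ Ici 0 := by norm_num
  have hpoint : ∀ x ∈ Icc (0 : ℝ) 1,
      x * f x - 1 / 2 * f x ≤ (x - 1 / 2) * f (1 / 2) := fun x hx => by
    rcases le_total x (1 / 2) with h | h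
    · nlinarith [hf.antitoneOn hx.1 hmid h]
    · nlinarith [hf.antitoneOn hmid hx.1 h]
  have := intervalIntegral.integral_mono_on zero_le_one
    (hf.intervalIntegrable_id_mul.sub (hfi.const_mul _))
    (Continuous.intervalIntegrable (by fun_prop) 0 1) hpoint
  rw [intervalIntegral.integral_sub hf.intervalIntegrable_id_mul (hfi.const_mul _),
    intervalIntegral.integral_const_mul, intervalIntegral.integral_mul_const,
    intervalIntegral.integral_comp_sub_right (fun x => x), integral_id] at this
  linarith

end DecreasingDensity

section Exactness

variable {β : ℝ} {g h φ : ℝ → ℝ} {K : NNReal}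

lemma decreasingDensity_of_lipschitzWith (hg : LipschitzWith K g)
    (hbdd : ∀ x ∈ Icc (0 : ℝ) 1, |g x| ≤ K) :
    DecreasingDensity ((Iio 1).indicator fun x => g x + (3 * K - K * x)) := by
  have hge : ∀ x ∈ Icc (0 : ℝ) 1, K * (2 - x) ≤ g x + (3 * K - K * x) := fun x hx => by
    linarith [(abs_le.1 (hbdd x hx)).1]
  have hmass : K * (3 / 2) ≤ ∫ x in 0..1, (g x + (3 * K - K * x)) := by
    have hcont : Continuous fun x => g x + (3 * K - K * x) := by
      have := hg.continuous
      fun_prop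
    calc (K * (3 / 2) : ℝ) = ∫ x in 0..1, K * (2 - x) := by
          rw [intervalIntegral.integral_const_mul, intervalIntegral.integral_sub] <;>
            norm_num
      _ ≤ ∫ x in 0..1, (g x + (3 * K - K * x)) :=
          intervalIntegral.integral_mono_on zero_le_one
            (Continuous.intervalIntegrable (by fun_prop) 0 1) (hcont.intervalIntegrable 0 1) hge
  refine .indicator_Iio (fun x _ y _ hxy => ?_) (fun x hx => ?_) ?_
  · have hlip := hg.dist_le_mul y x
    rw [Real.dist_eq, Real.dist_eq, abs_of_nonneg (sub_nonneg.2 hxy)] at hlip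
    linarith [le_abs_self (g y - g x)]
  · exact (mul_nonneg K.2 (by linarith [hx.2])).trans (hge x ⟨hx.1, hx.2.le⟩)
  · linarith [(abs_le.1 (hbdd 0 (by simp))).2, K.2]

-- `g - ∫ g` is the difference of two densities in the cone with the same mass.
lemma exists_abs_integral_comp_iterate_mul_sub_le (hβ : 2 ≤ β) (hg : LipschitzWith K g) :
    ∃ C, ∀ φ : ℝ → ℝ, Measurable φ → (∀ x, |φ x| ≤ 1) → ∀ n : ℕ,
      |(∫ x in 0..1, φ ((betaMap β)^[2 * n] x) * g x) -
          (∫ x in 0..1, φ ((betaMap β)^[2 * n] x)) * ∫ x in 0..1, g x| ≤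
        C * (1 - (3 * β ^ 2)⁻¹) ^ n := by
  have hgi := hg.continuous.intervalIntegrable (μ := volume) 0 1
  have hosc : ∀ x ∈ Icc (0 : ℝ) 1, |g x - g 0| ≤ K := fun x hx => by
    simpa [Real.dist_eq] using
      (hg.dist_le_mul x 0).trans
        (mul_le_of_le_one_right K.2 (by simpa [abs_of_nonneg hx.1] using hx.2))
  have hmean : |(∫ y in 0..1, g y) - g 0| ≤ K := by
    have := intervalIntegral.norm_integral_le_of_norm_le_const (a := 0) (b := 1)
      (f := fun x => g x - g 0) (C := K) fun x hx =>
        hosc x (Ioc_subset_Icc_self (by simpa using hx))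
    simpa [intervalIntegral.integral_sub hgi] using this
  have hf₁ := decreasingDensity_of_lipschitzWith (g := fun x => g x - g 0) (K := K)
    (LipschitzWith.of_dist_le_mul fun x y => by simpa using hg.dist_le_mul x y) hosc
  have hf₂ := decreasingDensity_of_lipschitzWith (g := fun _ => (∫ y in 0..1, g y) - g 0) (K := K)
    (LipschitzWith.of_dist_le_mul fun x y => by rw [dist_self]; positivity) fun _ _ => hmean
  have hline : IntervalIntegrable (fun x : ℝ => 3 * K - K * x) volume 0 1 :=
    Continuous.intervalIntegrable (by fun_prop) 0 1
  refine ⟨2 * ∫ x in 0..1, (Iio 1).indicator (fun x => g x - g 0 + (3 * K - K * x)) x,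
    fun φ hφ hB n => ?_⟩
  have hint {u : ℝ → ℝ} (hu : IntervalIntegrable u volume 0 1) :
      IntervalIntegrable (fun x => φ ((betaMap β)^[2 * n] x) * u x) volume 0 1 :=
    intervalIntegrable_bdd_mul hu (hφ.comp ((measurable_betaMap β).iterate _)) fun x => hB _
  convert hf₁.abs_integral_comp_iterate_sub_le hf₂ ?_ hβ hφ hB n using 1
  · rw [integral_mul_indicator_Iio, integral_mul_indicator_Iio,
      ← intervalIntegral.integral_sub (hint ((hgi.sub intervalIntegrable_const).add hline))
        (hint (intervalIntegrable_const.add hline)),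
      ← intervalIntegral.integral_mul_const,
      ← intervalIntegral.integral_sub (hint hgi) (hint intervalIntegrable_const)]
    congr 2 with x
    ring
  · ring
  · rw [integral_indicator_Iio, integral_indicator_Iio,
      intervalIntegral.integral_add (hgi.sub intervalIntegrable_const) hline,
      intervalIntegral.integral_add intervalIntegrable_const hline,
      intervalIntegral.integral_sub hgi intervalIntegrable_const]
    simp

lemma exists_lipschitzWith_integral_abs_sub_le (hh : IntervalIntegrable h volume 0 1) {ε : ℝ}
    (hε : 0 < ε) : ∃ g K, LipschitzWith K g ∧ ∫ x in 0..1, |h x - g x| ≤ ε := by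
  rw [intervalIntegrable_iff_integrableOn_Ioc_of_le zero_le_one] at hh
  obtain ⟨g, hsupp, hg, hle⟩ :=
    MemLp.exist_eLpNorm_sub_le ENNReal.one_ne_top le_rfl (memLp_one_iff_integrable.2 hh) hε
  obtain ⟨K, hK⟩ := hg.lipschitzWith_of_hasCompactSupport hsupp (by simp)
  refine ⟨g, K, hK, ?_⟩
  have hm : AEStronglyMeasurable (h - g) (volume.restrict (Ioc 0 1)) :=
    hh.aestronglyMeasurable.sub hg.continuous.aestronglyMeasurable
  rw [intervalIntegral.integral_of_le zero_le_one]
  refine (integral_norm_eq_lintegral_enorm hm).trans_le (ENNReal.toReal_le_of_le_ofReal hε.le ?_)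
  rwa [← eLpNorm_one_eq_lintegral_enorm]

lemma abs_integral_mul_sub_mul_integral_le (hφ : Measurable φ) (hB : ∀ x, |φ x| ≤ 1)
    (hh : IntervalIntegrable h volume 0 1) (hg : IntervalIntegrable g volume 0 1) :
    |(∫ x in 0..1, φ x * h x) - (∫ x in 0..1, φ x) * ∫ x in 0..1, h x| ≤
      |(∫ x in 0..1, φ x * g x) - (∫ x in 0..1, φ x) * ∫ x in 0..1, g x| +
        2 * ∫ x in 0..1, |h x - g x| := by
  have hdiff : |∫ x in 0..1, φ x * (h x - g x)| ≤ ∫ x in 0..1, |h x - g x| :=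
    abs_integral_mul_le_integral_abs (hh.sub hg) hB
  have hmean : |(∫ x in 0..1, φ x) * ∫ x in 0..1, (h x - g x)| ≤ ∫ x in 0..1, |h x - g x| := by
    rw [abs_mul]
    exact (mul_le_of_le_one_left (abs_nonneg _)
      (by simpa using abs_integral_le_of_abs_le hB zero_le_one)).trans
      (intervalIntegral.abs_integral_le_integral_abs zero_le_one)
  calc |(∫ x in 0..1, φ x * h x) - (∫ x in 0..1, φ x) * ∫ x in 0..1, h x|
      = |(∫ x in 0..1, φ x * g x) - (∫ x in 0..1, φ x) * (∫ x in 0..1, g x) +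
          ((∫ x in 0..1, φ x * (h x - g x)) -
            (∫ x in 0..1, φ x) * ∫ x in 0..1, (h x - g x))| := by
        simp_rw [mul_sub]
        rw [intervalIntegral.integral_sub (intervalIntegrable_bdd_mul hh hφ hB)
          (intervalIntegrable_bdd_mul hg hφ hB), intervalIntegral.integral_sub hh hg]
        ring_nf
    _ ≤ _ := by
        linarith [abs_add_le ((∫ x in 0..1, φ x * g x) - (∫ x in 0..1, φ x) * ∫ x in 0..1, g x)
          ((∫ x in 0..1, φ x * (h x - g x)) - (∫ x in 0..1, φ x) * ∫ x in 0..1, (h x - g x)),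
          abs_sub (∫ x in 0..1, φ x * (h x - g x))
            ((∫ x in 0..1, φ x) * ∫ x in 0..1, (h x - g x))]

theorem tendsto_integral_comp_iterate_mul_sub (hβ : 2 ≤ β) (hφ : Measurable φ)
    (hB : ∀ x, |φ x| ≤ 1) (hh : IntervalIntegrable h volume 0 1) :
    Tendsto (fun n => (∫ x in 0..1, φ ((betaMap β)^[2 * n] x) * h x) -
      (∫ x in 0..1, φ ((betaMap β)^[2 * n] x)) * ∫ x in 0..1, h x) atTop (𝓝 0) := by
  have hle : (3 * β ^ 2)⁻¹ ≤ 1 := inv_le_one_of_one_le₀ (by nlinarith)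
  have hlt : 1 - (3 * β ^ 2)⁻¹ < 1 := sub_lt_self 1 (by positivity)
  refine Metric.tendsto_nhds.2 fun ε hε => ?_
  obtain ⟨g, K, hg, hhg⟩ := exists_lipschitzWith_integral_abs_sub_le hh (by positivity : 0 < ε / 4)
  obtain ⟨C, hC⟩ := exists_abs_integral_comp_iterate_mul_sub_le hβ hg
  have hdecay : ∀ᶠ n in atTop, C * (1 - (3 * β ^ 2)⁻¹) ^ n < ε / 2 :=
    ((tendsto_pow_atTop_nhds_zero_of_lt_one (sub_nonneg.2 hle) hlt).const_mul C).eventually_lt_const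
      (by simpa using half_pos hε)
  filter_upwards [hdecay] with n hn
  have happrox := abs_integral_mul_sub_mul_integral_le (φ := fun x => φ ((betaMap β)^[2 * n] x))
    (hφ.comp ((measurable_betaMap β).iterate _)) (fun x => hB _) hh
    (hg.continuous.intervalIntegrable 0 1)
  rw [Real.dist_0_eq_abs]
  linarith [hC φ hφ hB n]

end Exactness

instance : IsFiniteMeasure lebI :=
  inferInstanceAs (IsFiniteMeasure (volume.restrict (Icc 0 1)))

lemma integral_lebI (f : ℝ → ℝ) : ∫ x, f x ∂lebI = ∫ x in 0..1, f x := by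
  rw [lebI, integral_Icc_eq_integral_Ioc, intervalIntegral.integral_of_le zero_le_one]

section InvariantMeasure

variable {β : ℝ} {φ : ℝ → ℝ} {μ : Measure ℝ}

lemma abs_integral_comp_betaMap_sub_le (hβ : 2 ≤ β) (hφ : Measurable φ) (hB : ∀ x, |φ x| ≤ 1) :
    |(∫ x in 0..1, φ (betaMap β x)) - ∫ x in 0..1, φ x| ≤ β - 2 := by
  have hβ0 : 0 < β := by linarith
  have hφi (a b : ℝ) : IntervalIntegrable (fun y => φ (Int.fract y)) volume a b :=
    intervalIntegrable_of_abs_le (by fun_prop) fun x => hB _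
  have htwo : ∫ y in 0..2, φ (Int.fract y) = 2 * ∫ y in 0..1, φ y := by
    have := integral_comp_fract_mul (f := fun _ => 1) hφ hB 2 intervalIntegrable_const
    simpa [mul_comm] using this
  have hscale : β * ∫ x in 0..1, φ (betaMap β x) =
      2 * (∫ y in 0..1, φ y) + ∫ y in 2..β, φ (Int.fract y) := by
    rw [← htwo, intervalIntegral.integral_add_adjacent_intervals (hφi 0 2) (hφi 2 β)]
    simp only [betaMap]
    rw [intervalIntegral.integral_comp_mul_left (fun y => φ (Int.fract y)) hβ0.ne', mul_zero,
      mul_one, smul_eq_mul, mul_inv_cancel_left₀ hβ0.ne']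
  have hrest := abs_integral_le_of_abs_le (φ := fun y => φ (Int.fract y)) (fun x => hB _) hβ
  have hmean := abs_integral_le_of_abs_le hB (zero_le_one' ℝ)
  rw [abs_le] at hrest hmean ⊢
  constructor <;> nlinarith

lemma abs_integral_comp_iterate_betaMap_sub_le (hβ : 2 ≤ β) (hφ : Measurable φ)
    (hB : ∀ x, |φ x| ≤ 1) (n : ℕ) :
    |(∫ x in 0..1, φ ((betaMap β)^[n] x)) - ∫ x in 0..1, φ x| ≤ n * (β - 2) := by
  induction n with
  | zero => simp
  | succ n ih =>
    have hstep := abs_integral_comp_betaMap_sub_le hβ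
      (hφ.comp ((measurable_betaMap β).iterate n)) fun x => hB _
    simp only [Function.comp_apply, ← Function.iterate_succ_apply] at hstep
    push_cast
    linarith [abs_sub_le (∫ x in 0..1, φ ((betaMap β)^[n + 1] x))
      (∫ x in 0..1, φ ((betaMap β)^[n] x)) (∫ x in 0..1, φ x)]

lemma decreasingDensity_indicator_one : DecreasingDensity ((Iio 1).indicator fun _ => 1) :=
  .indicator_Iio antitoneOn_const (by simp) (by norm_num)

lemma integral_comp_iterate_betaMap (hβ : 2 ≤ β) (hφ : Measurable φ) (hB : ∀ x, |φ x| ≤ 1)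
    (n : ℕ) : ∫ x in 0..1, φ ((betaMap β)^[n] x) =
      ∫ x in 0..1, φ x * (transferOp β)^[n] ((Iio 1).indicator fun _ => 1) x := by
  rw [← decreasingDensity_indicator_one.integral_comp_iterate_betaMap_mul hβ hφ hB n,
    integral_mul_indicator_Iio]
  simp only [mul_one]

theorem tendsto_integral_comp_iterate_betaMap [IsProbabilityMeasure μ] (hμ : μ ≪ lebI)
    (hinv : μ.map (betaMap β) = μ) (hβ : 2 ≤ β) (hφ : Measurable φ) (hB : ∀ x, |φ x| ≤ 1) :
    Tendsto (fun n => ∫ x in 0..1, φ ((betaMap β)^[2 * n] x)) atTop (𝓝 (∫ x, φ x ∂μ)) := by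
  have hdensity (ψ : ℝ → ℝ) : ∫ x in 0..1, ψ x * (μ.rnDeriv lebI x).toReal = ∫ x, ψ x ∂μ := by
    rw [← integral_toReal_rnDeriv_mul hμ, integral_lebI]
    simp only [mul_comm]
  have hmass : ∫ x in 0..1, (μ.rnDeriv lebI x).toReal = 1 := by
    simpa using hdensity fun _ => 1
  have hinvariant (n : ℕ) : ∫ x, φ ((betaMap β)^[n] x) ∂μ = ∫ x, φ x ∂μ := by
    have hn := MeasurePreserving.iterate ⟨measurable_betaMap β, hinv⟩ n
    conv_rhs => rw [← hn.map_eq]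
    rw [integral_map hn.aemeasurable hφ.aestronglyMeasurable]
  have hlim := tendsto_integral_comp_iterate_mul_sub hβ hφ hB
    ((intervalIntegrable_iff_integrableOn_Icc_of_le zero_le_one).2
      (Measure.integrable_toReal_rnDeriv (μ := μ) (ν := lebI)))
  simp only [hdensity fun x => φ ((betaMap β)^[_] x), hinvariant, hmass, mul_one] at hlim
  simpa using hlim.const_sub (∫ x, φ x ∂μ)

lemma abs_integral_comp_iterate_add_sub_le (hβ : 2 ≤ β) (hφ : Measurable φ)
    (hB : ∀ x, |φ x| ≤ 1) (j n : ℕ) :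
    |(∫ x in 0..1, φ ((betaMap β)^[2 * (n + j)] x)) - ∫ x in 0..1, φ ((betaMap β)^[2 * j] x)| ≤
      2 * (1 - (3 * β ^ 2)⁻¹) ^ j := by
  have hone := decreasingDensity_indicator_one
  obtain ⟨hdens, hmass⟩ := hone.iterate_transferOp hβ (2 * n)
  have hcontract := hdens.abs_integral_comp_iterate_sub_le hone hmass hβ hφ hB j
  have hφj : Measurable fun x => φ ((betaMap β)^[2 * j] x) :=
    hφ.comp ((measurable_betaMap β).iterate _)
  rw [hmass, ← integral_comp_iterate_betaMap hβ hφj fun x => hB _, integral_mul_indicator_Iio,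
    integral_indicator_Iio] at hcontract
  simpa [mul_add, add_comm (2 * n), Function.iterate_add_apply] using hcontract

theorem abs_integral_sub_integral_le [IsProbabilityMeasure μ] (hμ : μ ≪ lebI)
    (hinv : μ.map (betaMap β) = μ) (hβ : 2 ≤ β) (hφ : Measurable φ) (hB : ∀ x, |φ x| ≤ 1)
    (j : ℕ) : |(∫ x, φ x ∂μ) - ∫ x in 0..1, φ x| ≤
      2 * j * (β - 2) + 2 * (1 - (3 * β ^ 2)⁻¹) ^ j := by
  have hlim := (tendsto_add_atTop_iff_nat j).2
    (tendsto_integral_comp_iterate_betaMap hμ hinv hβ hφ hB)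
  refine le_of_tendsto' (hlim.sub_const (∫ x in 0..1, φ x)).abs fun n => ?_
  have hdrift := abs_integral_comp_iterate_betaMap_sub_le hβ hφ hB (2 * j)
  push_cast at hdrift
  linarith [abs_integral_comp_iterate_add_sub_le hβ hφ hB j n,
    abs_sub_le (∫ x in 0..1, φ ((betaMap β)^[2 * (n + j)] x))
      (∫ x in 0..1, φ ((betaMap β)^[2 * j] x)) (∫ x in 0..1, φ x)]

theorem eq_lebI_of_map_betaMap_two_eq [IsProbabilityMeasure μ] (hμ : μ ≪ lebI)
    (hinv : μ.map (betaMap 2) = μ) : μ = lebI := by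
  refine Measure.ext fun s hs => (measureReal_eq_measureReal_iff).1 ?_
  have hφ : Measurable (s.indicator fun _ => (1 : ℝ)) := measurable_const.indicator hs
  have hB : ∀ x, |s.indicator (fun _ => (1 : ℝ)) x| ≤ 1 := fun x => by
    by_cases hx : x ∈ s <;> simp [hx]
  have hbound := abs_integral_sub_integral_le hμ hinv le_rfl hφ hB
  simp only [← integral_lebI, integral_indicator_const _ hs, sub_self, mul_zero, zero_add,
    smul_eq_mul, mul_one] at hbound
  have hlim : Tendsto (fun j : ℕ => 2 * (1 - (3 * 2 ^ 2 : ℝ)⁻¹) ^ j) atTop (𝓝 0) := by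
    have := tendsto_pow_atTop_nhds_zero_of_lt_one (r := 1 - (3 * 2 ^ 2 : ℝ)⁻¹)
      (by norm_num) (by norm_num)
    simpa only [mul_zero] using this.const_mul 2
  exact sub_eq_zero.1 (abs_nonpos_iff.1 (ge_of_tendsto' hlim hbound))

lemma ae_mem_Ico_of_absolutelyContinuous_lebI (hμ : μ ≪ lebI) : ∀ᵐ x ∂μ, x ∈ Ico (0 : ℝ) 1 := by
  refine hμ.ae_le ?_
  rw [lebI, ← restrict_Ico_eq_restrict_Icc]
  exact ae_restrict_mem measurableSet_Ico

lemma emu_eq_integral_fract (hμ : μ ≪ lebI) : Emu μ = ∫ x, Int.fract x ∂μ := by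
  have hmem := ae_mem_Ico_of_absolutelyContinuous_lebI hμ
  rw [Emu, Measure.restrict_eq_self_of_ae_mem (hmem.mono fun x hx => Ico_subset_Icc_self hx)]
  exact integral_congr_ae (hmem.mono fun x hx => (Int.fract_eq_self.2 hx).symm)

lemma abs_fract_le_one (x : ℝ) : |Int.fract x| ≤ 1 := by
  rw [Int.abs_fract]
  exact (Int.fract_lt_one x).le

lemma integral_fract_mul (f : ℝ → ℝ) :
    ∫ x in 0..1, Int.fract x * f x = ∫ x in 0..1, x * f x :=
  intervalIntegral.integral_congr_Ioo_of_le zero_le_one fun x hx => by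
    simp only [Int.fract_eq_self.2 ⟨hx.1.le, hx.2⟩]

lemma abs_emu_sub_half_le [IsProbabilityMeasure μ] (hμ : μ ≪ lebI)
    (hinv : μ.map (betaMap β) = μ) (hβ : 2 ≤ β) (j : ℕ) :
    |Emu μ - 1 / 2| ≤ 2 * j * (β - 2) + 2 * (1 - (3 * β ^ 2)⁻¹) ^ j := by
  have hhalf : ∫ x in 0..1, Int.fract x = (1 / 2 : ℝ) := by
    simpa using integral_fract_mul fun _ => 1
  rw [emu_eq_integral_fract hμ, ← hhalf]
  exact abs_integral_sub_integral_le hμ hinv hβ measurable_fract abs_fract_le_one j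

lemma emu_mem_Icc [IsProbabilityMeasure μ] (hμ : μ ≪ lebI) (hinv : μ.map (betaMap β) = μ)
    (hβ : 2 ≤ β) : Emu μ ∈ Icc (1 / 12) (1 / 2) := by
  rw [emu_eq_integral_fract hμ]
  refine isClosed_Icc.mem_of_tendsto (tendsto_integral_comp_iterate_betaMap hμ hinv hβ
    measurable_fract abs_fract_le_one) (.of_forall fun n => ?_)
  obtain ⟨hdens, hmass⟩ := decreasingDensity_indicator_one.iterate_transferOp hβ (2 * n)
  rw [integral_indicator_Iio, intervalIntegral.integral_const, sub_zero, one_smul] at hmass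
  rw [integral_comp_iterate_betaMap hβ measurable_fract abs_fract_le_one, integral_fract_mul,
    mem_Icc]
  simpa only [hmass] using And.intro hdens.integral_div_twelve_le_integral_id_mul
    hdens.integral_id_mul_le_integral_div_two

lemma one_div_emu_sub_two_mem_Icc [IsProbabilityMeasure μ] (hμ : μ ≪ lebI)
    (hinv : μ.map (betaMap β) = μ) (hβ : 2 ≤ β) : 1 / Emu μ - 2 ∈ Icc 0 10 := by
  obtain ⟨hle, hge⟩ := emu_mem_Icc hμ hinv hβ
  have hpos : 0 < Emu μ := by linarith
  have h2 : 2 ≤ 1 / Emu μ := (le_div_iff₀ hpos).2 (by linarith)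
  have h12 : 1 / Emu μ ≤ 12 := (div_le_iff₀ hpos).2 (by linarith)
  constructor <;> linarith

lemma one_div_emu_sub_two_le [IsProbabilityMeasure μ] (hμ : μ ≪ lebI)
    (hinv : μ.map (betaMap β) = μ) (hβ : β ∈ Icc 2 3) (j : ℕ) :
    1 / Emu μ - 2 ≤ 48 * (j * (β - 2) + (26 / 27) ^ j) := by
  obtain ⟨hle, hge⟩ := emu_mem_Icc hμ hinv hβ.1
  have hrate : 1 - (3 * β ^ 2)⁻¹ ∈ Icc 0 (26 / 27) := by
    have h12 : (3 * β ^ 2)⁻¹ ≤ 1 := inv_le_one_of_one_le₀ (by nlinarith [hβ.1])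
    have h27 : (27 : ℝ)⁻¹ ≤ (3 * β ^ 2)⁻¹ :=
      inv_anti₀ (by nlinarith [hβ.1]) (by nlinarith [hβ.1, hβ.2])
    constructor <;> linarith
  have hpow := pow_le_pow_left₀ hrate.1 hrate.2 j
  have hmean := (abs_le.1 (abs_emu_sub_half_le hμ hinv hβ.1 j)).1
  have hdiv : 1 / Emu μ - 2 ≤ 24 * (1 / 2 - Emu μ) := by
    rw [div_sub' (by linarith), div_le_iff₀ (by linarith)]
    nlinarith
  linarith

end InvariantMeasure

-- The optimal `j` is of order `|log t|`.
lemma exists_le_mul_one_add_abs_log_mul {a q : ℝ} (ha : 0 < a) (hq : q ∈ Ioo (0 : ℝ) 1) :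
    ∃ K > 0, ∀ t > 0, ∀ δ ≥ 0, (∀ j : ℕ, t ≤ a * (j * δ + q ^ j)) →
      t ≤ K * ((1 + |Real.log t|) * δ) := by
  have hL : 0 < -Real.log q := neg_pos.2 (Real.log_neg hq.1 hq.2)
  set c := |Real.log (2 * a)|
  refine ⟨2 * a * ((c + 1) / -Real.log q + 1), by positivity, fun t ht δ hδ h => ?_⟩
  have hy : 0 ≤ (c + |Real.log t|) / -Real.log q := by positivity
  set j := ⌈(c + |Real.log t|) / -Real.log q⌉₊
  have hj : (j : ℝ) ≤ ((c + 1) / -Real.log q + 1) * (1 + |Real.log t|) :=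
    calc (j : ℝ) ≤ (c + |Real.log t|) / -Real.log q + 1 := (Nat.ceil_lt_add_one hy).le
      _ ≤ (c + 1) * (1 + |Real.log t|) / -Real.log q + (1 + |Real.log t|) := by
          gcongr
          · nlinarith [abs_nonneg (Real.log (2 * a)), abs_nonneg (Real.log t)]
          · linarith [abs_nonneg (Real.log t)]
      _ = _ := by ring
  have hqj : q ^ j ≤ t / (2 * a) := by
    rw [← Real.log_le_log_iff (pow_pos hq.1 j) (by positivity), Real.log_pow,
      Real.log_div ht.ne' (by positivity)]
    have : c + |Real.log t| ≤ j * -Real.log q := (div_le_iff₀ hL).1 (Nat.le_ceil _)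
    linarith [neg_abs_le (Real.log t), le_abs_self (Real.log (2 * a))]
  have hjδ := mul_le_mul_of_nonneg_right hj hδ
  have haq : a * q ^ j ≤ t / 2 := by
    calc a * q ^ j ≤ a * (t / (2 * a)) := by gcongr
      _ = t / 2 := by field_simp
  nlinarith [h j]

section Coupling

variable {F : ℝ → ℝ}

lemma isBigO_div_log_of_deriv_isBigO (hF : Differentiable ℝ F) (hF0 : F 0 = 0)
    (hderiv : deriv F =O[𝓝[>] 0] fun x => (Real.log x)⁻¹) :
    F =O[𝓝[>] 0] fun x => x / Real.log x := by
  obtain ⟨C, hC, hbound⟩ := hderiv.exists_pos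
  obtain ⟨u, hu, hIoo⟩ := mem_nhdsGT_iff_exists_Ioo_subset.1 hbound.bound
  refine .of_bound C (mem_of_superset (Ioo_mem_nhdsGT (lt_min hu one_pos)) fun x hx => ?_)
  obtain ⟨c, hc, hslope⟩ := exists_deriv_eq_slope F hx.1 hF.continuous.continuousOn
    hF.differentiableOn
  have hx1 : x < 1 := hx.2.trans_le (min_le_right _ _)
  have hlog : |Real.log x| ≤ |Real.log c| := by
    rw [abs_of_neg (Real.log_neg hx.1 hx1), abs_of_neg (Real.log_neg hc.1 (hc.2.trans hx1))]
    exact neg_le_neg (Real.log_le_log hc.1 hc.2.le)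
  have hFx : F x = x * deriv F c := by
    rw [hslope, hF0, sub_zero, sub_zero, mul_div_cancel₀ _ hx.1.ne']
  calc ‖F x‖ = x * ‖deriv F c‖ := by rw [hFx, norm_mul, Real.norm_of_nonneg hx.1.le]
    _ ≤ x * (C * ‖(Real.log c)⁻¹‖) := by
        gcongr
        · exact hx.1.le
        · exact hIoo ⟨hc.1, hc.2.trans (hx.2.trans_le (min_le_left _ _))⟩
    _ ≤ x * (C * ‖(Real.log x)⁻¹‖) := by
        have := abs_pos.2 (Real.log_neg hx.1 hx1).ne
        have := hx.1.le
        rw [norm_inv, norm_inv, Real.norm_eq_abs, Real.norm_eq_abs]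
        gcongr
    _ = C * ‖x / Real.log x‖ := by
        rw [div_eq_mul_inv, norm_mul, Real.norm_of_nonneg hx.1.le, mul_left_comm]

lemma exists_one_add_abs_log_mul_le (hF : F =O[𝓝[>] 0] fun x => x / Real.log x) {b : ℝ}
    (hb : BddAbove (F '' Icc 0 b)) :
    ∃ C > 0, ∀ t ∈ Ioc 0 b, (1 + |Real.log t|) * F t ≤ C * t := by
  obtain ⟨M, hM⟩ := hb
  obtain ⟨C, hC, hbound⟩ := hF.exists_pos
  obtain ⟨u, hu, hIoo⟩ := mem_nhdsGT_iff_exists_Ioo_subset.1 hbound.bound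
  obtain ⟨v, hv, hvu, hv1⟩ : ∃ v > 0, v < u ∧ Real.log v ≤ -1 :=
    ⟨min (u / 2) (Real.exp (-1)), lt_min (half_pos hu) (Real.exp_pos _),
      (min_le_left _ _).trans_lt (half_lt_self hu),
      (Real.log_le_iff_le_exp (lt_min (half_pos hu) (Real.exp_pos _))).2 (min_le_right _ _)⟩
  set m := max |Real.log v| |Real.log b|
  have : 0 ≤ m := le_max_of_le_left (abs_nonneg _)
  refine ⟨max (2 * C) ((1 + m) * |M| / v), lt_max_of_lt_left (by positivity), fun t ht => ?_⟩
  have ht0 := ht.1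
  rcases le_total t v with htv | hvt
  · have hlog : 1 ≤ |Real.log t| := by
      rw [le_abs]
      right
      linarith [Real.log_le_log ht.1 htv]
    have hFt : F t ≤ C * (t / |Real.log t|) := by
      refine (le_abs_self _).trans ((hIoo ⟨ht.1, htv.trans_lt hvu⟩).trans_eq ?_)
      rw [norm_div, Real.norm_of_nonneg ht0.le, Real.norm_eq_abs]
    calc (1 + |Real.log t|) * F t ≤ (1 + |Real.log t|) * (C * (t / |Real.log t|)) := by gcongr
      _ ≤ (2 * |Real.log t|) * (C * (t / |Real.log t|)) := by
          gcongr
          linarith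
      _ = 2 * C * t := by field_simp
      _ ≤ max (2 * C) ((1 + m) * |M| / v) * t := by gcongr; exact le_max_left _ _
  · have hlog : |Real.log t| ≤ m :=
      abs_le_max_abs_abs (Real.log_le_log hv hvt) (Real.log_le_log ht.1 ht.2)
    calc (1 + |Real.log t|) * F t ≤ (1 + |Real.log t|) * |M| := by
          gcongr
          exact (hM ⟨t, ⟨ht.1.le, ht.2⟩, rfl⟩).trans (le_abs_self M)
      _ ≤ (1 + m) * |M| := by gcongr
      _ = (1 + m) * |M| / v * v := by rw [div_mul_cancel₀ _ hv.ne']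
      _ ≤ max (2 * C) ((1 + m) * |M| / v) * t := by gcongr; exact le_max_right _ _

theorem exists_forall_one_div_emu_sub_two_eq_zero (hnonneg : ∀ x, 0 ≤ F x)
    (hbdd : ∀ b, BddAbove (F '' Icc 0 b)) (hO : F =O[𝓝[>] 0] fun x => x / Real.log x) :
    ∃ ε₁ > (0 : ℝ), ∀ ε : ℝ, 0 ≤ ε → ε < ε₁ →
      ∀ μ : Measure ℝ, IsProbabilityMeasure μ → μ ≪ lebI →
        μ.map (Tsc ε F μ) = μ → 1 / Emu μ - 2 = 0 := by
  obtain ⟨C, hC, hFle⟩ := exists_one_add_abs_log_mul_le hO (hbdd 10)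
  obtain ⟨K, hK, hKle⟩ := exists_le_mul_one_add_abs_log_mul (a := 48) (q := 26 / 27)
    (by norm_num) (by norm_num)
  refine ⟨min (1 / (C * 10)) (1 / (K * C)), by positivity, fun ε hε hlt μ hprob hμ hinv => ?_⟩
  have hε₁ : ε * (C * 10) < 1 :=
    (lt_div_iff₀ (by positivity)).1 (hlt.trans_le (min_le_left _ _))
  have hε₂ : ε * (K * C) < 1 :=
    (lt_div_iff₀ (by positivity)).1 (hlt.trans_le (min_le_right _ _))
  change μ.map (betaMap (2 + ε * F (1 / Emu μ - 2))) = μ at hinv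
  have hδ : 0 ≤ ε * F (1 / Emu μ - 2) := mul_nonneg hε (hnonneg _)
  obtain ⟨ht0, ht10⟩ := one_div_emu_sub_two_mem_Icc hμ hinv (by linarith)
  have hquant (hβ : 2 + ε * F (1 / Emu μ - 2) ≤ 3) (j : ℕ) :=
    one_div_emu_sub_two_le hμ hinv ⟨by linarith, hβ⟩ j
  simp only [add_sub_cancel_left] at hquant
  generalize 1 / Emu μ - 2 = t at *
  by_contra hne
  have ht : 0 < t := ht0.lt_of_ne' hne
  have hFt := hFle t ⟨ht, ht10⟩
  have hδ1 : ε * F t ≤ 1 :=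
    calc ε * F t ≤ ε * ((1 + |Real.log t|) * F t) := by
          gcongr
          exact le_mul_of_one_le_left (hnonneg t) (by simp)
      _ ≤ ε * (C * t) := mul_le_mul_of_nonneg_left hFt hε
      _ ≤ ε * (C * 10) := by gcongr
      _ ≤ 1 := hε₁.le
  refine lt_irrefl t ?_
  calc t ≤ K * ((1 + |Real.log t|) * (ε * F t)) := hKle t ht _ hδ (hquant (by linarith))
    _ = K * ε * ((1 + |Real.log t|) * F t) := by ring
    _ ≤ K * ε * (C * t) := by gcongr
    _ = ε * (K * C) * t := by ring
    _ < t := mul_lt_of_lt_one_left ht hε₂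

end Coupling

theorem stmt1_general (F : ℝ → ℝ) (hF0 : F 0 = 0) (hnonneg : ∀ x, 0 ≤ F x)
    (hbdd : ∀ b, BddAbove (F '' Icc 0 b)) (hO : F =O[𝓝[>] 0] fun x => x / Real.log x) :
    ∃ ε₁ > (0 : ℝ), ∀ ε : ℝ, 0 ≤ ε → ε < ε₁ →
      ∀ μ : Measure ℝ, IsProbabilityMeasure μ → μ ≪ lebI →
        Measure.map (Tsc ε F μ) μ = μ → μ = lebI := by
  obtain ⟨ε₁, hε₁, hzero⟩ := exists_forall_one_div_emu_sub_two_eq_zero hnonneg hbdd hO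
  refine ⟨ε₁, hε₁, fun ε hε hlt μ hprob hμ hinv => eq_lebI_of_map_betaMap_two_eq hμ ?_⟩
  have hT : Tsc ε F μ = betaMap 2 := by
    funext x
    rw [Tsc, betaMap, hzero ε hε hlt μ hprob hμ hinv, hF0, mul_zero, add_zero]
  rwa [← hT]

/-- For weak self-consistency, Lebesgue is the unique acim. -/
theorem stmt1 (F : ℝ → ℝ) (hF : ContDiff ℝ 1 F) (hF0 : F 0 = 0)
    (hFpos : ∀ x : ℝ, x ≠ 0 → 0 < F x)
    (hF' : ∃ C > 0, ∃ x₀ ∈ Set.Ioo (0:ℝ) 1, ∀ x : ℝ, 0 < x → x < x₀ →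
      |deriv F x| ≤ C / |Real.log x|) :
    ∃ ε₁ > (0:ℝ), ∀ ε : ℝ, 0 ≤ ε → ε < ε₁ →
      ∀ μ : Measure ℝ, IsProbabilityMeasure μ → μ ≪ lebI →
        Measure.map (Tsc ε F μ) μ = μ → μ = lebI := by
  obtain ⟨C, -, x₀, hx₀, hderiv⟩ := hF'
  have hO : deriv F =O[𝓝[>] 0] fun x => (Real.log x)⁻¹ :=
    .of_bound C (mem_of_superset (Ioo_mem_nhdsGT hx₀.1) fun x hx => by
      simpa [div_eq_mul_inv] using hderiv x hx.1 hx.2)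
  have hnonneg : ∀ x, 0 ≤ F x := fun x => by
    rcases eq_or_ne x 0 with rfl | hx
    exacts [hF0.ge, (hFpos x hx).le]
  exact stmt1_general F hF0 hnonneg (fun b => (isCompact_Icc.image hF.continuous).bddAbove)
    (isBigO_div_log_of_deriv_isBigO (hF.differentiable one_ne_zero) hF0 hO)
end

section
/- There exists a constant K̃ > 0 such that for every β with 2 < β < 3, 0 ≤ 1/E(β) − 2 ≤ K̃·(β − 2)·(1 + |log(β − 2)|). -/
/-- The orbit of `1` under the β-map `T_β(x) = βx mod 1`: `t₀ = 1`,
`t_{n+1} = β t_n − ⌊β t_n⌋`. -/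
noncomputable def betaOrbit (β : ℝ) : ℕ → ℝ
  | 0 => 1
  | n + 1 => Int.fract (β * betaOrbit β n)

/-- `E(β) = (∑ t_n(β)²/(2βⁿ)) / (∑ t_n(β)/βⁿ)`, the expectation of the unique acim of
the β-map. -/
noncomputable def Ebeta (β : ℝ) : ℝ :=
  (∑' n : ℕ, (betaOrbit β n) ^ 2 / (2 * β ^ n)) / (∑' n : ℕ, betaOrbit β n / β ^ n)

/-!
Subtracting twice the numerator of `E(β)` from its denominator leaves `D = ∑ tₙ(1 - tₙ)/βⁿ`, and
`1/E(β) - 2` is `D` divided by the numerator, which is at least `1/2`. With `ε = t₁ = fract β`, the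
orbit grows at most by the factor `β` per step, so every term of `D` is at most `ε`; it is also at
most `β⁻ⁿ`. Using the first bound for `n` up to about `|log ε| / log β` and the second one for the
geometric tail gives `D = O(ε (1 + |log ε|))`, uniformly for `β` bounded away from `1`.
-/

section TruncatedGeometric

variable {a : ℕ → ℝ} {e r : ℝ}

theorem exists_nat_pow_le_and_le_abs_log_div (hr : 0 < r) (hr1 : r < 1) (he : 0 < e) :
    ∃ N : ℕ, r ^ N ≤ e ∧ N ≤ 1 + |Real.log e| / |Real.log r| := by
  have hlog : 0 < |Real.log r| := abs_pos.2 (Real.log_neg hr hr1).ne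
  refine ⟨⌈|Real.log e| / |Real.log r|⌉₊, ?_, ?_⟩
  · rw [← Real.log_le_log_iff (pow_pos hr _) he, Real.log_pow]
    have hN := (div_le_iff₀ hlog).1 (Nat.le_ceil (|Real.log e| / |Real.log r|))
    rw [abs_of_neg (Real.log_neg hr hr1)] at hN ⊢
    linarith [neg_abs_le (Real.log e)]
  · linarith [Nat.ceil_lt_add_one (div_nonneg (abs_nonneg (Real.log e)) hlog.le)]

theorem tsum_le_mul_add_pow_div (hr : 0 ≤ r) (hr1 : r < 1) (ha : Summable a)
    (hae : ∀ n, a n ≤ e) (har : ∀ n, a n ≤ r ^ n) (N : ℕ) :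
    ∑' n, a n ≤ N * e + r ^ N / (1 - r) := by
  have head : ∑ n ∈ Finset.range N, a n ≤ N * e := by
    simpa using Finset.sum_le_card_nsmul (Finset.range N) a e fun n _ => hae n
  have tail : ∑' n, a (n + N) ≤ r ^ N / (1 - r) :=
    hasSum_le (fun n => (har (n + N)).trans_eq (by rw [pow_add, mul_comm]))
      ((summable_nat_add_iff N).2 ha).hasSum ((hasSum_geometric_of_lt_one hr hr1).mul_left _)
  rw [← ha.sum_add_tsum_nat_add N]
  exact add_le_add head tail

theorem tsum_le_mul_one_add_abs_log (hr : 0 < r) (hr1 : r < 1) (he : 0 ≤ e) (ha : Summable a)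
    (hae : ∀ n, a n ≤ e) (har : ∀ n, a n ≤ r ^ n) :
    ∑' n, a n ≤ e * (1 + |Real.log e| / |Real.log r| + 1 / (1 - r)) := by
  obtain rfl | he := he.eq_or_lt
  · simpa only [zero_mul] using tsum_nonpos hae
  obtain ⟨N, hNe, hN⟩ := exists_nat_pow_le_and_le_abs_log_div hr hr1 he
  calc ∑' n, a n ≤ N * e + r ^ N / (1 - r) := tsum_le_mul_add_pow_div hr.le hr1 ha hae har N
    _ ≤ (1 + |Real.log e| / |Real.log r|) * e + e / (1 - r) := by
        have := sub_pos.2 hr1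
        gcongr
    _ = e * (1 + |Real.log e| / |Real.log r| + 1 / (1 - r)) := by ring

end TruncatedGeometric

section PowerWeights

variable {b β : ℝ} {c : ℕ → ℝ}

theorem div_pow_le_inv_pow {x : ℝ} (hb : 0 < b) (hbβ : b ≤ β) (hx : x ≤ 1) (n : ℕ) :
    x / β ^ n ≤ b⁻¹ ^ n := by
  rw [inv_pow, ← one_div]
  gcongr

theorem summable_div_pow (hβ : 1 < β) (hc : ∀ n, c n ∈ unitInterval) :
    Summable fun n => c n / β ^ n := by
  have hβ0 : 0 < β := one_pos.trans hβ
  exact Summable.of_nonneg_of_le (fun n => div_nonneg (hc n).1 (pow_nonneg hβ0.le n))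
    (fun n => div_pow_le_inv_pow hβ0 le_rfl (hc n).2 n)
    (summable_geometric_of_lt_one (inv_nonneg.2 hβ0.le) (inv_lt_one_of_one_lt₀ hβ))

end PowerWeights

section BetaOrbit

variable {b β : ℝ}

theorem betaOrbit_mem_unitInterval (β : ℝ) (n : ℕ) : betaOrbit β n ∈ unitInterval := by
  cases n with
  | zero => exact unitInterval.one_mem
  | succ n => exact unitInterval.fract_mem _

theorem betaOrbit_mul_one_sub_mem_unitInterval (β : ℝ) (n : ℕ) :
    betaOrbit β n * (1 - betaOrbit β n) ∈ unitInterval :=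
  unitInterval.mul_mem (betaOrbit_mem_unitInterval β n)
    (Set.Icc.mem_iff_one_sub_mem.1 (betaOrbit_mem_unitInterval β n))

theorem betaOrbit_succ_le (hβ : 0 ≤ β) (n : ℕ) :
    betaOrbit β (n + 1) ≤ β ^ n * Int.fract β := by
  induction n with
  | zero => simp [betaOrbit]
  | succ n ih =>
    calc betaOrbit β (n + 2) ≤ β * betaOrbit β (n + 1) :=
          sub_le_self _ (Int.cast_nonneg
            (Int.floor_nonneg.2 (mul_nonneg hβ (betaOrbit_mem_unitInterval β _).1)))
      _ ≤ β * (β ^ n * Int.fract β) := by gcongr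
      _ = β ^ (n + 1) * Int.fract β := by ring

theorem betaOrbit_mul_one_sub_div_pow_le_fract (hβ : 1 ≤ β) (n : ℕ) :
    betaOrbit β n * (1 - betaOrbit β n) / β ^ n ≤ Int.fract β := by
  have hβ0 : 0 < β := one_pos.trans_le hβ
  cases n with
  | zero => simp [betaOrbit]
  | succ n =>
    have ht := betaOrbit_mem_unitInterval β (n + 1)
    rw [div_le_iff₀ (by positivity)]
    calc betaOrbit β (n + 1) * (1 - betaOrbit β (n + 1)) ≤ betaOrbit β (n + 1) :=
          mul_le_of_le_one_right ht.1 (sub_le_self 1 ht.1)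
      _ ≤ β ^ n * Int.fract β := betaOrbit_succ_le hβ0.le n
      _ ≤ β ^ (n + 1) * Int.fract β :=
          mul_le_mul_of_nonneg_right (pow_le_pow_right₀ hβ n.le_succ) (Int.fract_nonneg β)
      _ = Int.fract β * β ^ (n + 1) := mul_comm _ _

/-- The integral `∫₀¹ (1 - 2x) h_β(x) dx` against the unnormalised Parry density `h_β`, in the
form of a series in the orbit of `1`. It measures how far the mean `E(β)` is from `1/2`. -/
noncomputable def betaDefect (β : ℝ) : ℝ :=
  ∑' n : ℕ, betaOrbit β n * (1 - betaOrbit β n) / β ^ n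

theorem betaDefect_nonneg (hβ : 0 ≤ β) : 0 ≤ betaDefect β :=
  tsum_nonneg fun n =>
    div_nonneg (betaOrbit_mul_one_sub_mem_unitInterval β n).1 (pow_nonneg hβ n)

theorem betaDefect_le (hb : 1 < b) (hbβ : b ≤ β) :
    betaDefect β ≤ Int.fract β *
      (1 + |Real.log (Int.fract β)| / |Real.log b⁻¹| + 1 / (1 - b⁻¹)) := by
  have hb0 : 0 < b := one_pos.trans hb
  have hβ : 1 < β := hb.trans_le hbβ
  exact tsum_le_mul_one_add_abs_log (inv_pos.2 hb0) (inv_lt_one_of_one_lt₀ hb) (Int.fract_nonneg β)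
    (summable_div_pow hβ (betaOrbit_mul_one_sub_mem_unitInterval β))
    (betaOrbit_mul_one_sub_div_pow_le_fract hβ.le)
    fun n => div_pow_le_inv_pow hb0 hbβ (betaOrbit_mul_one_sub_mem_unitInterval β n).2 n

theorem summable_betaOrbit_sq_div (hβ : 1 < β) :
    Summable fun n => betaOrbit β n ^ 2 / (2 * β ^ n) := by
  have h := summable_div_pow hβ fun n => unitInterval.mul_mem
    (betaOrbit_mem_unitInterval β n) (betaOrbit_mem_unitInterval β n)
  exact (h.div_const 2).congr fun n => by ring

theorem half_le_tsum_betaOrbit_sq_div (hβ : 1 < β) :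
    1 / 2 ≤ ∑' n : ℕ, betaOrbit β n ^ 2 / (2 * β ^ n) := by
  have term_nonneg (n : ℕ) : 0 ≤ betaOrbit β n ^ 2 / (2 * β ^ n) :=
    div_nonneg (sq_nonneg _) (mul_nonneg zero_le_two (pow_nonneg (one_pos.trans hβ).le n))
  simpa [betaOrbit] using (summable_betaOrbit_sq_div hβ).le_tsum 0 fun n _ => term_nonneg n

theorem betaDefect_eq_sub (hβ : 1 < β) :
    betaDefect β =
      ∑' n : ℕ, betaOrbit β n / β ^ n - 2 * ∑' n : ℕ, betaOrbit β n ^ 2 / (2 * β ^ n) := by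
  rw [betaDefect, ← tsum_mul_left,
    ← (summable_div_pow hβ (betaOrbit_mem_unitInterval β)).tsum_sub
      ((summable_betaOrbit_sq_div hβ).mul_left 2)]
  exact tsum_congr fun n => by ring

theorem one_div_ebeta_sub_two (hβ : 1 < β) :
    1 / Ebeta β - 2 = betaDefect β / ∑' n : ℕ, betaOrbit β n ^ 2 / (2 * β ^ n) := by
  have hA : ∑' n : ℕ, betaOrbit β n ^ 2 / (2 * β ^ n) ≠ 0 :=
    (one_half_pos.trans_le (half_le_tsum_betaOrbit_sq_div hβ)).ne'
  rw [Ebeta, one_div_div, betaDefect_eq_sub hβ, sub_div, mul_div_cancel_right₀ _ hA]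

theorem one_div_ebeta_sub_two_nonneg (hβ : 1 < β) : 0 ≤ 1 / Ebeta β - 2 := by
  rw [one_div_ebeta_sub_two hβ]
  exact div_nonneg (betaDefect_nonneg (one_pos.trans hβ).le)
    (one_half_pos.le.trans (half_le_tsum_betaOrbit_sq_div hβ))

theorem one_div_ebeta_sub_two_le (hβ : 1 < β) : 1 / Ebeta β - 2 ≤ 2 * betaDefect β := by
  rw [one_div_ebeta_sub_two hβ]
  calc betaDefect β / ∑' n : ℕ, betaOrbit β n ^ 2 / (2 * β ^ n) ≤ betaDefect β / (1 / 2) :=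
        div_le_div_of_nonneg_left (betaDefect_nonneg (one_pos.trans hβ).le) one_half_pos
          (half_le_tsum_betaOrbit_sq_div hβ)
    _ = 2 * betaDefect β := by ring

end BetaOrbit

theorem stmt5_general {b : ℝ} (hb : 1 < b) :
    ∃ K > (0 : ℝ), ∀ β : ℝ, b ≤ β →
      0 ≤ 1 / Ebeta β - 2 ∧
      1 / Ebeta β - 2 ≤ K * Int.fract β * (1 + |Real.log (Int.fract β)|) := by
  have hgap : 0 < 1 - b⁻¹ := sub_pos.2 (inv_lt_one_of_one_lt₀ hb)
  refine ⟨2 * (1 + 1 / |Real.log b⁻¹| + 1 / (1 - b⁻¹)), by positivity, fun β hbβ => ?_⟩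
  have hβ : 1 < β := hb.trans_le hbβ
  refine ⟨one_div_ebeta_sub_two_nonneg hβ, ?_⟩
  have hε : 0 ≤ Int.fract β := Int.fract_nonneg β
  set ε := Int.fract β
  calc 1 / Ebeta β - 2 ≤ 2 * betaDefect β := one_div_ebeta_sub_two_le hβ
    _ ≤ 2 * (ε * (1 + |Real.log ε| / |Real.log b⁻¹| + 1 / (1 - b⁻¹))) := by
        gcongr
        exact betaDefect_le hb hbβ
    _ ≤ 2 * (ε * ((1 + 1 / |Real.log b⁻¹| + 1 / (1 - b⁻¹)) * (1 + |Real.log ε|))) := by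
        gcongr
        have h1 : 0 ≤ 1 / |Real.log b⁻¹| := by positivity
        have h2 : 0 ≤ (1 + 1 / (1 - b⁻¹)) * |Real.log ε| := by positivity
        rw [div_eq_mul_one_div |Real.log ε|]
        linarith
    _ = 2 * (1 + 1 / |Real.log b⁻¹| + 1 / (1 - b⁻¹)) * ε * (1 + |Real.log ε|) := by ring

/-- Log-Lipschitz bound for `1/E(β) − 2` near `β = 2`. -/
theorem stmt5 :
    ∃ K > (0:ℝ), ∀ β : ℝ, 2 < β → β < 3 →
      0 ≤ 1 / Ebeta β - 2 ∧
      1 / Ebeta β - 2 ≤ K * (β - 2) * (1 + |Real.log (β - 2)|) := by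
  obtain ⟨K, hK, h⟩ := stmt5_general one_lt_two
  refine ⟨K, hK, fun β h2 h3 => ?_⟩
  have hfract : Int.fract β = β - 2 := Int.fract_eq_iff.2 ⟨by linarith, by linarith, 2, by simp⟩
  simpa only [hfract] using h β h2.le
end
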